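/- arXiv:1710.09072 — 2 statements merged into one kernel-verified Lean document; each statement's English description precedes it below -/
import Mathlib

section
/- Let f be an entire function of exponential type σ that is bounded on the real line, and define S_f(x;h) := f(x+h) - f(x) - f'(x)h. Then for all real x, h, h': |S_f(x;h') - S_f(x;h)| ≤ σ²·‖f‖_{L∞(ℝ)}·δ(h,h')·|h'-h|, where δ(h,h') := min(|h|,|h'|) + |h'-h|/2. -/
/-!
By Phragmén–Lindelöf in the two half-planes, `‖f z‖ ≤ M * exp (σ * |im z|)`. After normalizing
`σ = 1`, the residues of `(φ z - φ 0) / (z² cos z)` give `φ'(0) = ∑ₖ cₖ (φ(wₖ) - φ(0))` over the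
zeros `wₖ` of the cosine. The case `φ = cos` shows `∑ₖ cₖ = 0`, which leaves Riesz's interpolation
formula `φ'(0) = ∑ₖ cₖ φ(wₖ)`; the case `φ = sin`, which is extremal, then shows `∑ₖ |cₖ| = 1`,
and Bernstein's inequality follows. Hence `f'` is `σ² M`-Lipschitz on the real line. Since the
derivative of `h ↦ S_f(x; h)` is `f'(x + h) - f'(x)`, integrating the bound `σ² M |t|` along the
segment between `h` and `h'`, starting at the end closer to `0`, concludes.
-/

open Complex Filter Finset Metric Topology
open scoped Real

variable {E : Type*} [NormedAddCommGroup E]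

/-- A function on `ℂ` of exponential type at most `σ`, in the sense that
`f z = O(exp ((σ + ε) * ‖z‖))` for every `ε > 0`; holomorphy is not part of the definition. -/
def HasExponentialType (f : ℂ → E) (σ : ℝ) : Prop :=
  ∀ ε > (0 : ℝ), ∃ C > (0 : ℝ), ∀ z : ℂ, ‖f z‖ ≤ C * Real.exp ((σ + ε) * ‖z‖)

theorem HasExponentialType.comp_neg {f : ℂ → E} {σ : ℝ} (htype : HasExponentialType f σ) :
    HasExponentialType (fun z ↦ f (-z)) σ := fun ε hε ↦ by
  obtain ⟨C, hC, hbound⟩ := htype ε hε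
  exact ⟨C, hC, fun z ↦ by simpa using hbound (-z)⟩

variable [NormedSpace ℂ E]

/-! ### Residues at simple poles -/

section Residues

variable {g : ℂ → E} {c : ℂ} {R : ℝ} {s : Finset ℂ}

theorem tendsto_sub_smul_sub_sum_principalParts {a : ℂ → E} {w : ℂ} (hw : w ∈ s)
    (hg : Tendsto (fun z ↦ (z - w) • g z) (𝓝[≠] w) (𝓝 (a w))) :
    Tendsto (fun z ↦ (z - w) • (g z - ∑ v ∈ s, (z - v)⁻¹ • a v)) (𝓝[≠] w) (𝓝 0) := by
  classical
  have hrest : Tendsto (fun z ↦ ∑ v ∈ s.erase w, (z - w) • (z - v)⁻¹ • a v) (𝓝[≠] w) (𝓝 0) := by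
    have hcont : ContinuousAt (fun z ↦ ∑ v ∈ s.erase w, (z - w) • (z - v)⁻¹ • a v) w := by
      refine tendsto_finsetSum _ fun v hv ↦ ?_
      have hne : w - v ≠ 0 := sub_ne_zero.2 (ne_of_mem_erase hv).symm
      exact ContinuousAt.tendsto (by fun_prop (disch := exact hne))
    simpa using hcont.tendsto.mono_left nhdsWithin_le_nhds
  have hlim := (hg.sub_const (a w)).sub hrest
  rw [sub_self, sub_zero] at hlim
  refine hlim.congr' ?_
  filter_upwards [self_mem_nhdsWithin] with z hz
  rw [← add_sum_erase s _ hw, smul_sub, smul_add, smul_inv_smul₀ (sub_ne_zero.2 hz), smul_sum]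
  abel

theorem tendsto_sub_smul_inv_smul_of_simple_zero {F : ℂ → ℂ} {ψ : ℂ → E} {w : ℂ}
    (hψ : ContinuousAt ψ w) (hF : F w = 0) (hF' : deriv F w ≠ 0) :
    Tendsto (fun z ↦ (z - w) • (F z)⁻¹ • ψ z) (𝓝[≠] w) (𝓝 ((deriv F w)⁻¹ • ψ w)) := by
  have hslope := (differentiableAt_of_deriv_ne_zero hF').hasDerivAt.tendsto_slope.inv₀ hF'
  refine (hslope.smul (hψ.tendsto.mono_left nhdsWithin_le_nhds)).congr fun z ↦ ?_
  rw [slope_def_field, hF, sub_zero, inv_div, div_eq_mul_inv, mul_smul]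

variable [CompleteSpace E]

theorem exists_tendsto_nhdsNE_of_tendsto_sub_smul_zero {w : ℂ}
    (hd : ∀ᶠ z in 𝓝[≠] w, DifferentiableAt ℂ g z)
    (hg : Tendsto (fun z ↦ (z - w) • g z) (𝓝[≠] w) (𝓝 0)) :
    ∃ l, Tendsto g (𝓝[≠] w) (𝓝 l) := by
  refine ⟨_, tendsto_limUnder_of_differentiable_on_punctured_nhds_of_isLittleO hd ?_⟩
  have hconst : Tendsto (fun z ↦ (z - w) • g w) (𝓝[≠] w) (𝓝 0) :=
    (Continuous.tendsto' (by fun_prop) _ _ (by simp)).mono_left nhdsWithin_le_nhds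
  have hdiff : (fun z ↦ (z - w) • (g z - g w)) =o[𝓝[≠] w] fun _ ↦ (1 : ℂ) := by
    simpa [Asymptotics.isLittleO_one_iff, smul_sub] using hg.sub hconst
  refine ((Asymptotics.isBigO_refl (fun z ↦ (z - w)⁻¹) (𝓝[≠] w)).smul_isLittleO hdiff).congr'
    ?_ (by simp)
  filter_upwards [self_mem_nhdsWithin] with z hz
  exact inv_smul_smul₀ (sub_ne_zero.2 hz) _

theorem circleIntegral_eq_zero_of_tendsto_sub_smul_zero (hR : 0 ≤ R) (hs : ∀ w ∈ s, w ∈ ball c R)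
    (hcont : ContinuousOn g (closedBall c R \ s)) (hdiff : DifferentiableOn ℂ g (ball c R \ s))
    (hg : ∀ w ∈ s, Tendsto (fun z ↦ (z - w) • g z) (𝓝[≠] w) (𝓝 0)) :
    (∮ z in C(c, R), g z) = 0 := by
  classical
  have hopen : IsOpen (ball c R \ (s : Set ℂ)) := isOpen_ball.sdiff s.finite_toSet.isClosed
  have hpunctured : ∀ w ∈ s, ball c R \ (s : Set ℂ) ∈ 𝓝[≠] w := fun w hw ↦ by
    filter_upwards [nhdsWithin_le_nhds (isOpen_ball.mem_nhds (hs w hw)),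
      nhdsNE_le_cofinite w s.finite_toSet.compl_mem_cofinite] with z hz hzs using ⟨hz, hzs⟩
  have hlim : ∀ w ∈ s, ∃ l, Tendsto g (𝓝[≠] w) (𝓝 l) := fun w hw ↦
    exists_tendsto_nhdsNE_of_tendsto_sub_smul_zero
      (mem_of_superset (hpunctured w hw) fun z hz ↦ hdiff.differentiableAt (hopen.mem_nhds hz))
      (hg w hw)
  choose! l hl using hlim
  set G : ℂ → E := fun z ↦ if z ∈ s then l z else g z with hG
  have hGg : Set.EqOn G g (s : Set ℂ)ᶜ := fun z hz ↦ if_neg hz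
  have hGcont : ContinuousOn G (closedBall c R) := fun z hz ↦ by
    by_cases hzs : z ∈ s
    · refine ContinuousAt.continuousWithinAt ?_
      rw [← continuousWithinAt_compl_self, ContinuousWithinAt, hG]
      simp only [if_pos hzs]
      refine (hl z hzs).congr' ?_
      filter_upwards [hpunctured z hzs] with y hy using (hGg hy.2).symm
    · refine ((hcont z ⟨hz, hzs⟩).congr (fun y hy ↦ hGg hy.2) (hGg hzs)).mono_of_mem_nhdsWithin ?_
      exact inter_mem_nhdsWithin _ (s.finite_toSet.isClosed.isOpen_compl.mem_nhds hzs)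
  have hGdiff : ∀ z ∈ ball c R \ (s : Set ℂ), DifferentiableAt ℂ G z := fun z hz ↦
    (hdiff.congr fun y hy ↦ hGg hy.2).differentiableAt (hopen.mem_nhds hz)
  calc (∮ z in C(c, R), g z) = ∮ z in C(c, R), G z :=
        circleIntegral.integral_congr hR fun z hz ↦
          (hGg fun hzs ↦ sphere_disjoint_ball.ne_of_mem hz (hs z hzs) rfl).symm
    _ = 0 := circleIntegral_eq_zero_of_differentiable_on_off_countable hR s.countable_toSet
        hGcont hGdiff

theorem circleIntegral_eq_sum_residues {a : ℂ → E} (hR : 0 ≤ R) (hs : ∀ w ∈ s, w ∈ ball c R)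
    (hcont : ContinuousOn g (closedBall c R \ s)) (hdiff : DifferentiableOn ℂ g (ball c R \ s))
    (hg : ∀ w ∈ s, Tendsto (fun z ↦ (z - w) • g z) (𝓝[≠] w) (𝓝 (a w))) :
    (∮ z in C(c, R), g z) = (2 * π * I : ℂ) • ∑ w ∈ s, a w := by
  have hsphere : sphere c R ⊆ closedBall c R \ s := fun z hz ↦
    ⟨sphere_subset_closedBall hz, fun hzs ↦ sphere_disjoint_ball.ne_of_mem hz (hs z hzs) rfl⟩
  have hpart : ∀ w ∈ s, DifferentiableOn ℂ (fun z ↦ (z - w)⁻¹ • a w) (s : Set ℂ)ᶜ :=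
    fun w hw z hz ↦ by
      have hne : z - w ≠ 0 := sub_ne_zero.2 fun h ↦ hz (h ▸ hw)
      fun_prop (disch := exact hne)
  have hparts : DifferentiableOn ℂ (fun z ↦ ∑ w ∈ s, (z - w)⁻¹ • a w) (s : Set ℂ)ᶜ :=
    DifferentiableOn.fun_sum hpart
  have hzero : (∮ z in C(c, R), (g z - ∑ w ∈ s, (z - w)⁻¹ • a w)) = 0 :=
    circleIntegral_eq_zero_of_tendsto_sub_smul_zero hR hs
      (hcont.sub (hparts.continuousOn.mono fun z hz ↦ hz.2))
      (hdiff.sub (hparts.mono fun z hz ↦ hz.2))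
      fun w hw ↦ tendsto_sub_smul_sub_sum_principalParts hw (hg w hw)
  have hpart_int : ∀ w ∈ s, CircleIntegrable (fun z ↦ (z - w)⁻¹ • a w) c R := fun w hw ↦
    ((hpart w hw).continuousOn.mono fun z hz ↦ (hsphere hz).2).circleIntegrable hR
  rw [circleIntegral.integral_sub ((hcont.mono hsphere).circleIntegrable hR)
    (CircleIntegrable.fun_sum s hpart_int), circleIntegral.integral_fun_sum hpart_int,
    sub_eq_zero] at hzero
  rw [hzero, smul_sum]
  refine sum_congr rfl fun w hw ↦ ?_
  rw [circleIntegral.integral_smul_const, circleIntegral.integral_sub_inv_of_mem_ball (hs w hw)]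

theorem circleIntegral_inv_smul_eq_sum_of_simple_zeros {F : ℂ → ℂ} {ψ : ℂ → E} (hR : 0 ≤ R)
    (hF : DiffContOnCl ℂ F (ball c R)) (hψ : DiffContOnCl ℂ ψ (ball c R))
    (hs : ∀ w ∈ s, w ∈ ball c R) (hzero : ∀ w ∈ s, F w = 0) (hsimple : ∀ w ∈ s, deriv F w ≠ 0)
    (hne : ∀ z ∈ closedBall c R \ s, F z ≠ 0) :
    (∮ z in C(c, R), (F z)⁻¹ • ψ z) = (2 * π * I : ℂ) • ∑ w ∈ s, (deriv F w)⁻¹ • ψ w := by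
  refine circleIntegral_eq_sum_residues hR hs ?_ ?_ fun w hw ↦
    tendsto_sub_smul_inv_smul_of_simple_zero
      (hψ.differentiableAt isOpen_ball (hs w hw)).continuousAt (hzero w hw) (hsimple w hw)
  · exact ((hF.continuousOn_ball.mono Set.sdiff_subset).inv₀ hne).smul
      (hψ.continuousOn_ball.mono Set.sdiff_subset)
  · exact ((hF.differentiableOn.mono Set.sdiff_subset).inv fun z hz ↦
      hne z ⟨ball_subset_closedBall hz.1, hz.2⟩).smul (hψ.differentiableOn.mono Set.sdiff_subset)

end Residues

/-! ### Size of the cosine -/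

section CosineBound

theorem norm_cos_sq_eq_cosh_sq_sub_sin_sq (z : ℂ) :
    ‖cos z‖ ^ 2 = Real.cosh z.im ^ 2 - Real.sin z.re ^ 2 := by
  have hcos : cos z = (Real.cos z.re * Real.cosh z.im : ℝ) +
      (-(Real.sin z.re * Real.sinh z.im) : ℝ) * I := by
    rw [cos_eq]; push_cast; ring
  rw [← normSq_eq_norm_sq, hcos, normSq_add_mul_I]
  linear_combination Real.cosh z.im ^ 2 * Real.sin_sq_add_cos_sq z.re -
    Real.sin z.re ^ 2 * Real.cosh_sq z.im

theorem one_add_sq_le_cosh_sq (y : ℝ) : 1 + y ^ 2 ≤ Real.cosh y ^ 2 := by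
  have hsinh : |y| ≤ |Real.sinh y| := by
    rw [Real.abs_sinh]
    exact Real.self_le_sinh_iff.2 (abs_nonneg y)
  rw [Real.cosh_sq']
  gcongr 1 + ?_
  exact sq_le_sq.2 hsinh

theorem abs_sin_le_abs_nat_mul_pi_sub_abs (n : ℕ) (x : ℝ) : |Real.sin x| ≤ |n * π - (|x|)| := by
  have hsin : |Real.sin (n * π - |x|)| = |Real.sin x| := by
    rw [Real.sin_nat_mul_pi_sub, abs_neg, abs_mul, abs_neg_one_pow, one_mul]
    rcases abs_choice x with h | h <;> simp [h]
  exact hsin ▸ Real.abs_sin_le_abs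

theorem two_mul_abs_sin_re_le_im_sq {n : ℕ} (hn : 0 < n) {z : ℂ} (hz : ‖z‖ = n * π) :
    2 * |Real.sin z.re| ≤ z.im ^ 2 := by
  have hradius : 2 ≤ n * π := by
    have : (1 : ℝ) ≤ n := by exact_mod_cast hn
    nlinarith [Real.pi_gt_three]
  have hgap : 0 ≤ n * π - |z.re| := sub_nonneg.2 (hz ▸ abs_re_le_norm z)
  calc 2 * |Real.sin z.re| ≤ (n * π + |z.re|) * (n * π - |z.re|) := by
        gcongr
        · linarith [abs_nonneg z.re]
        · exact (abs_sin_le_abs_nat_mul_pi_sub_abs n z.re).trans_eq (abs_of_nonneg hgap)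
    _ = z.im ^ 2 := by
        rw [← sq_sub_sq, sq_abs, ← hz, ← normSq_eq_norm_sq, normSq_apply]
        ring

theorem exp_abs_im_le_four_mul_norm_cos {n : ℕ} (hn : 0 < n) {z : ℂ} (hz : ‖z‖ = n * π) :
    Real.exp |z.im| ≤ 4 * ‖cos z‖ := by
  have hsin : 2 * Real.sin z.re ^ 2 ≤ Real.cosh z.im ^ 2 := by
    have hsq : Real.sin z.re ^ 2 ≤ |Real.sin z.re| := by
      rw [← sq_abs]
      exact pow_le_of_le_one (abs_nonneg _) (Real.abs_sin_le_one _) two_ne_zero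
    linarith [two_mul_abs_sin_re_le_im_sq hn hz, one_add_sq_le_cosh_sq z.im]
  have hcosh : Real.cosh z.im ≤ 2 * ‖cos z‖ := by
    refine le_of_sq_le_sq ?_ (by positivity)
    nlinarith [norm_cos_sq_eq_cosh_sq_sub_sin_sq z, sq_nonneg ‖cos z‖]
  have hexp : Real.exp |z.im| ≤ 2 * Real.cosh z.im := by
    rw [Real.cosh_eq, mul_div_cancel₀ _ two_ne_zero]
    exact Real.exp_abs_le z.im
  linarith

theorem norm_exp_mul_I_le_exp_abs_im (z : ℂ) : ‖exp (z * I)‖ ≤ Real.exp |z.im| := by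
  rw [norm_exp, mul_I_re]
  exact Real.exp_le_exp.2 (neg_le_abs _)

theorem norm_cos_le_exp_abs_im (z : ℂ) : ‖cos z‖ ≤ Real.exp |z.im| := by
  have := norm_exp_mul_I_le_exp_abs_im (-z)
  rw [neg_im, abs_neg] at this
  rw [cos, norm_div, Complex.norm_two, div_le_iff₀ two_pos]
  linarith [norm_add_le (exp (z * I)) (exp (-z * I)), norm_exp_mul_I_le_exp_abs_im z]

theorem norm_sin_le_exp_abs_im (z : ℂ) : ‖sin z‖ ≤ Real.exp |z.im| := by
  have := norm_exp_mul_I_le_exp_abs_im (-z)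
  rw [neg_im, abs_neg] at this
  rw [sin, norm_div, norm_mul, norm_I, mul_one, Complex.norm_two, div_le_iff₀ two_pos]
  linarith [norm_sub_le (exp (-z * I)) (exp (z * I)), norm_exp_mul_I_le_exp_abs_im z]

end CosineBound

/-! ### Zeros of the cosine -/

section CosineZeros

/-- The zeros `(2k + 1)π/2` of the cosine: the nodes of Riesz's interpolation formula. -/
noncomputable def cosZero (k : ℤ) : ℂ := (2 * k + 1) * π / 2

theorem cos_cosZero (k : ℤ) : cos (cosZero k) = 0 := cos_eq_zero_iff.2 ⟨k, rfl⟩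

theorem sin_cosZero_sq (k : ℤ) : sin (cosZero k) ^ 2 = 1 := by
  simpa [cos_cosZero] using sin_sq_add_cos_sq (cosZero k)

theorem sin_cosZero_ne_zero (k : ℤ) : sin (cosZero k) ≠ 0 := fun h ↦ by
  simpa [h] using sin_cosZero_sq k

theorem cosZero_eq_ofReal (k : ℤ) : cosZero k = ((2 * k + 1) * π / 2 : ℝ) := by
  simp [cosZero]

theorem cosZero_im (k : ℤ) : (cosZero k).im = 0 := by
  rw [cosZero_eq_ofReal, ofReal_im]

theorem cosZero_ne_zero (k : ℤ) : cosZero k ≠ 0 := fun h ↦ by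
  simpa [h] using cos_cosZero k

theorem cosZero_injective : Function.Injective cosZero := fun j k h ↦ by
  simpa [cosZero, Real.pi_ne_zero] using h

theorem norm_cosZero_lt_nat_mul_pi_iff {k : ℤ} {n : ℕ} :
    ‖cosZero k‖ < n * π ↔ k ∈ Ico (-n : ℤ) n := by
  have hnorm : ‖cosZero k‖ = |2 * (k : ℝ) + 1| / 2 * π := by
    rw [cosZero_eq_ofReal, norm_real, Real.norm_eq_abs, abs_div, abs_mul, abs_of_pos Real.pi_pos,
      abs_two]
    ring
  have hcast : |2 * (k : ℝ) + 1| < n * 2 ↔ |2 * k + 1| < (n * 2 : ℤ) := by norm_cast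
  rw [hnorm, mul_lt_mul_iff_left₀ Real.pi_pos, div_lt_iff₀ two_pos, hcast, abs_lt, mem_Ico]
  lia

theorem exists_cosZero_eq_of_norm_le {n : ℕ} (hn : 0 < n) {z : ℂ} (hz : ‖z‖ ≤ n * π)
    (hcos : cos z = 0) : ∃ k ∈ Ico (-n : ℤ) n, cosZero k = z := by
  obtain ⟨k, rfl⟩ := cos_eq_zero_iff.1 hcos
  refine ⟨k, norm_cosZero_lt_nat_mul_pi_iff.1 (hz.lt_of_ne fun hnorm ↦ ?_), rfl⟩
  have := exp_abs_im_le_four_mul_norm_cos hn hnorm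
  rw [hcos, norm_zero, mul_zero] at this
  exact this.not_gt (Real.exp_pos _)

end CosineZeros

/-! ### Riesz's interpolation formula -/

section Riesz

/-- The coefficients `1 / (w² sin w)` of Riesz's interpolation formula, where `w = cosZero k`.
Their sign is `sin w = (-1)ᵏ`. -/
noncomputable def rieszWeight (k : ℤ) : ℂ := (cosZero k ^ 2 * sin (cosZero k))⁻¹

theorem rieszWeight_mul_sin_cosZero (k : ℤ) :
    rieszWeight k * sin (cosZero k) = (‖rieszWeight k‖ : ℝ) := by
  have hsin : ‖sin (cosZero k)‖ = 1 := by
    rw [← pow_eq_one_iff_of_nonneg (norm_nonneg _) two_ne_zero, ← norm_pow, sin_cosZero_sq,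
      norm_one]
  have hsq : (‖cosZero k‖ : ℂ) ^ 2 = cosZero k ^ 2 := by
    rw [cosZero_eq_ofReal, norm_real, Real.norm_eq_abs, ← ofReal_pow, sq_abs, ofReal_pow]
  rw [rieszWeight, norm_inv, norm_mul, norm_pow, hsin, mul_one, mul_inv,
    inv_mul_cancel_right₀ (sin_cosZero_ne_zero k)]
  push_cast
  rw [hsq]

theorem hasDerivAt_mul_cos (z : ℂ) : HasDerivAt (fun z ↦ z * cos z) (cos z - z * sin z) z :=
  ((hasDerivAt_id z).mul (hasDerivAt_cos z)).congr_deriv (by simp [sub_eq_add_neg])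

variable {φ : ℂ → E} {M : ℝ}

theorem norm_inv_mul_cos_smul_dslope_le (hb : ∀ z, ‖φ z‖ ≤ M * Real.exp |z.im|) {n : ℕ}
    (hn : 0 < n) {z : ℂ} (hz : ‖z‖ = n * π) :
    ‖(z * cos z)⁻¹ • dslope φ 0 z‖ ≤ 8 * M / (n * π) ^ 2 := by
  have hR : 0 < n * π := by positivity
  have hcos := exp_abs_im_le_four_mul_norm_cos hn hz
  have hcos_pos : 0 < ‖cos z‖ := by linarith [Real.exp_pos |z.im|]
  have hM : 0 ≤ M := by simpa using (norm_nonneg _).trans (hb 0)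
  have hsub : ‖φ z - φ 0‖ ≤ 8 * M * ‖cos z‖ :=
    calc ‖φ z - φ 0‖ ≤ ‖φ z‖ + ‖φ 0‖ := norm_sub_le _ _
      _ ≤ M * Real.exp |z.im| + M * Real.exp |z.im| := by
          gcongr
          · exact hb z
          · exact (hb 0).trans (mul_le_mul_of_nonneg_left (Real.exp_le_exp.2 (by simp)) hM)
      _ = 2 * M * Real.exp |z.im| := by ring
      _ ≤ 2 * M * (4 * ‖cos z‖) := by gcongr
      _ = 8 * M * ‖cos z‖ := by ring
  have hz0 : z ≠ 0 := norm_pos_iff.1 (hz ▸ hR)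
  rw [dslope_of_ne _ hz0, slope_def_module, sub_zero, norm_smul, norm_smul, norm_inv, norm_inv,
    norm_mul, hz]
  calc (n * π * ‖cos z‖)⁻¹ * ((n * π)⁻¹ * ‖φ z - φ 0‖)
      ≤ (n * π * ‖cos z‖)⁻¹ * ((n * π)⁻¹ * (8 * M * ‖cos z‖)) := by gcongr
    _ = 8 * M / (n * π) ^ 2 := by field_simp

variable [CompleteSpace E]

theorem circleIntegral_inv_mul_cos_smul {ψ : ℂ → E} (hψ : Differentiable ℂ ψ) {n : ℕ}
    (hn : 0 < n) :
    (∮ z in C(0, n * π), (z * cos z)⁻¹ • ψ z) = (2 * π * I : ℂ) •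
      (ψ 0 - ∑ k ∈ Ico (-n : ℤ) n, (cosZero k * sin (cosZero k))⁻¹ • ψ (cosZero k)) := by
  have hR : 0 < n * π := by positivity
  have hderiv : deriv (fun z ↦ z * cos z) = fun z ↦ cos z - z * sin z :=
    funext fun z ↦ (hasDerivAt_mul_cos z).deriv
  have hzero_notMem : 0 ∉ (Ico (-n : ℤ) n).image cosZero := by simp [cosZero_ne_zero]
  have hresidues := circleIntegral_inv_smul_eq_sum_of_simple_zeros (c := 0) hR.le
    (s := insert 0 ((Ico (-n : ℤ) n).image cosZero)) (F := fun z ↦ z * cos z) (ψ := ψ)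
    (Differentiable.diffContOnCl (by fun_prop)) hψ.diffContOnCl
    ?mem_ball ?zeros ?simple ?no_other_zeros
  case mem_ball =>
    simp only [forall_mem_insert, forall_mem_image, mem_ball_zero_iff, norm_zero, hR,
      norm_cosZero_lt_nat_mul_pi_iff, imp_self, implies_true, and_self]
  case zeros =>
    rw [forall_mem_insert, forall_mem_image]
    exact ⟨zero_mul _, fun k _ ↦ by rw [cos_cosZero, mul_zero]⟩
  case simple =>
    rw [hderiv, forall_mem_insert, forall_mem_image]
    exact ⟨by simp, fun k _ ↦ by simp [cos_cosZero, cosZero_ne_zero, sin_cosZero_ne_zero]⟩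
  case no_other_zeros =>
    rintro z ⟨hz, hzs⟩
    simp only [coe_insert, Set.mem_insert_iff, mem_coe, mem_image, not_or] at hzs
    exact mul_ne_zero hzs.1 fun hcos ↦
      hzs.2 (exists_cosZero_eq_of_norm_le hn (mem_closedBall_zero_iff.1 hz) hcos)
  rw [hresidues, hderiv, sum_insert hzero_notMem, sum_image cosZero_injective.injOn]
  simp [cos_cosZero, inv_neg, sub_eq_add_neg]

theorem norm_deriv_zero_sub_sum_rieszWeight_smul_le (hφ : Differentiable ℂ φ)
    (hb : ∀ z, ‖φ z‖ ≤ M * Real.exp |z.im|) {n : ℕ} (hn : 0 < n) :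
    ‖deriv φ 0 - ∑ k ∈ Ico (-n : ℤ) n, rieszWeight k • (φ (cosZero k) - φ 0)‖ ≤
      8 * M / (n * π) := by
  have hR : 0 < n * π := by positivity
  have hψ : Differentiable ℂ (dslope φ 0) :=
    differentiableOn_univ.1 ((differentiableOn_dslope univ_mem).2 hφ.differentiableOn)
  have hterm (k : ℤ) : (cosZero k * sin (cosZero k))⁻¹ • dslope φ 0 (cosZero k) =
      rieszWeight k • (φ (cosZero k) - φ 0) := by
    rw [dslope_of_ne _ (cosZero_ne_zero k), slope_def_module, sub_zero, smul_smul, rieszWeight]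
    congr 1
    ring
  have hintegral := circleIntegral.norm_integral_le_of_norm_le_const hR.le fun z hz ↦
    norm_inv_mul_cos_smul_dslope_le hb hn (mem_sphere_zero_iff_norm.1 hz)
  rw [circleIntegral_inv_mul_cos_smul hψ hn, dslope_same, norm_smul] at hintegral
  simp only [hterm] at hintegral
  have hnorm : ‖(2 * π * I : ℂ)‖ = 2 * π := by simp [abs_of_pos Real.pi_pos]
  rw [hnorm, mul_assoc (2 * π)] at hintegral
  refine (le_of_mul_le_mul_left hintegral Real.two_pi_pos).trans_eq ?_
  field_simp

theorem tendsto_sum_rieszWeight_smul_sub (hφ : Differentiable ℂ φ)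
    (hb : ∀ z, ‖φ z‖ ≤ M * Real.exp |z.im|) :
    Tendsto (fun n : ℕ ↦ ∑ k ∈ Ico (-n : ℤ) n, rieszWeight k • (φ (cosZero k) - φ 0)) atTop
      (𝓝 (deriv φ 0)) := by
  have herror : Tendsto (fun n : ℕ ↦ 8 * M / (n * π)) atTop (𝓝 0) :=
    tendsto_const_nhds.div_atTop (tendsto_natCast_atTop_atTop.atTop_mul_const Real.pi_pos)
  rw [tendsto_iff_norm_sub_tendsto_zero]
  refine squeeze_zero' (.of_forall fun n ↦ norm_nonneg _) ?_ herror
  filter_upwards [eventually_gt_atTop 0] with n hn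
  rw [norm_sub_rev]
  exact norm_deriv_zero_sub_sum_rieszWeight_smul_le hφ hb hn

theorem tendsto_sum_rieszWeight :
    Tendsto (fun n : ℕ ↦ ∑ k ∈ Ico (-n : ℤ) n, rieszWeight k) atTop (𝓝 0) := by
  have := tendsto_sum_rieszWeight_smul_sub (φ := cos) (M := 1) differentiable_cos
    fun z ↦ (one_mul (Real.exp _)).symm ▸ norm_cos_le_exp_abs_im z
  simpa [cos_cosZero] using this.neg

theorem tendsto_sum_rieszWeight_smul (hφ : Differentiable ℂ φ)
    (hb : ∀ z, ‖φ z‖ ≤ M * Real.exp |z.im|) :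
    Tendsto (fun n : ℕ ↦ ∑ k ∈ Ico (-n : ℤ) n, rieszWeight k • φ (cosZero k)) atTop
      (𝓝 (deriv φ 0)) := by
  have := (tendsto_sum_rieszWeight_smul_sub hφ hb).add (tendsto_sum_rieszWeight.smul_const (φ 0))
  simpa [← sum_smul, smul_sub, sum_sub_distrib] using this

theorem tendsto_sum_norm_rieszWeight :
    Tendsto (fun n : ℕ ↦ ∑ k ∈ Ico (-n : ℤ) n, ‖rieszWeight k‖) atTop (𝓝 1) := by
  have := tendsto_sum_rieszWeight_smul (φ := sin) (M := 1) differentiable_sin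
    fun z ↦ (one_mul (Real.exp _)).symm ▸ norm_sin_le_exp_abs_im z
  simp only [smul_eq_mul, rieszWeight_mul_sin_cosZero, ← ofReal_sum, Complex.deriv_sin, cos_zero,
    ← ofReal_one] at this
  exact tendsto_ofReal_iff.1 this

theorem norm_deriv_zero_le_of_norm_le_exp_abs_im (hφ : Differentiable ℂ φ)
    (hb : ∀ z, ‖φ z‖ ≤ M * Real.exp |z.im|) : ‖deriv φ 0‖ ≤ M := by
  have hnode (k : ℤ) : ‖φ (cosZero k)‖ ≤ M := by simpa [cosZero_im] using hb (cosZero k)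
  have hweights : Tendsto (fun n : ℕ ↦ (∑ k ∈ Ico (-n : ℤ) n, ‖rieszWeight k‖) * M) atTop
      (𝓝 M) := by
    simpa using tendsto_sum_norm_rieszWeight.mul_const M
  refine le_of_tendsto_of_tendsto' (tendsto_sum_rieszWeight_smul hφ hb).norm hweights fun n ↦ ?_
  rw [sum_mul]
  refine norm_sum_le_of_le _ fun k _ ↦ ?_
  rw [norm_smul]
  gcongr
  exact hnode k

end Riesz

/-! ### Growth off the real line -/

section PhragmenLindelof

variable {f : ℂ → E} {σ M : ℝ}

theorem norm_le_mul_exp_im_of_norm_le_exp_norm {C τ : ℝ} (hf : Differentiable ℂ f)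
    (hgrowth : ∀ z, ‖f z‖ ≤ C * Real.exp (τ * ‖z‖)) (hM : ∀ x : ℝ, ‖f x‖ ≤ M) {z : ℂ}
    (hz : 0 ≤ z.im) : ‖f z‖ ≤ M * Real.exp (τ * z.im) := by
  set g : ℂ → E := fun w ↦ exp (-τ * w) • f (I * w) with hg
  have hnorm (w : ℂ) : ‖g w‖ = Real.exp (-(τ * w.re)) * ‖f (I * w)‖ := by
    rw [hg, norm_smul, norm_exp, ← ofReal_neg, re_ofReal_mul, neg_mul]
  have hrot (w : ℂ) : ‖f (I * w)‖ ≤ C * Real.exp (τ * ‖w‖) := by simpa using hgrowth (I * w)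
  have hg_growth : g =O[Bornology.cobounded ℂ ⊓ 𝓟 {w | 0 < w.re}]
      fun w ↦ Real.exp ((|τ| + τ) * ‖w‖ ^ (1 : ℝ)) := by
    refine .of_bound C (.of_forall fun w ↦ ?_)
    have hfactor : -(τ * w.re) ≤ |τ| * ‖w‖ := by
      refine (neg_le_abs _).trans ?_
      rw [abs_mul]
      gcongr
      exact abs_re_le_norm w
    rw [hnorm, Real.rpow_one, Real.norm_of_nonneg (Real.exp_pos _).le, add_mul, Real.exp_add,
      mul_left_comm]
    gcongr
    exact hrot w
  have hg_real : IsBoundedUnder (· ≤ ·) atTop fun x : ℝ ↦ ‖g x‖ := by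
    refine isBoundedUnder_of_eventually_le (a := C) ?_
    filter_upwards [eventually_ge_atTop 0] with x hx
    have := hrot x
    rw [norm_real, Real.norm_of_nonneg hx] at this
    rw [hnorm, ofReal_re, Real.exp_neg, inv_mul_le_iff₀ (Real.exp_pos _), mul_comm _ C]
    exact this
  have hg_imag (x : ℝ) : ‖g (x * I)‖ ≤ M := by
    have hrotate : I * (x * I) = (-x : ℝ) := by
      push_cast
      linear_combination (x : ℂ) * I_sq
    rw [hnorm, hrotate]
    simpa using hM (-x)
  have hle := PhragmenLindelof.right_half_plane_of_bounded_on_real (z := -I * z)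
    (Differentiable.diffContOnCl (by fun_prop)) ⟨1, one_lt_two, _, hg_growth⟩ hg_real hg_imag
    (by simpa using hz)
  rw [hnorm, ← mul_assoc, mul_neg, I_mul_I, neg_neg, one_mul, Real.exp_neg,
    inv_mul_le_iff₀ (Real.exp_pos _), mul_comm] at hle
  simpa using hle

theorem HasExponentialType.norm_le_mul_exp_im (htype : HasExponentialType f σ)
    (hf : Differentiable ℂ f) (hM : ∀ x : ℝ, ‖f x‖ ≤ M) {z : ℂ} (hz : 0 ≤ z.im) :
    ‖f z‖ ≤ M * Real.exp (σ * z.im) := by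
  have hlim : Tendsto (fun ε : ℝ ↦ M * Real.exp ((σ + ε) * z.im)) (𝓝[>] 0)
      (𝓝 (M * Real.exp (σ * z.im))) :=
    (Continuous.tendsto' (by fun_prop) _ _ (by simp)).mono_left nhdsWithin_le_nhds
  refine ge_of_tendsto hlim ?_
  filter_upwards [self_mem_nhdsWithin] with ε hε
  obtain ⟨C, -, hgrowth⟩ := htype ε hε
  exact norm_le_mul_exp_im_of_norm_le_exp_norm hf hgrowth hM hz

theorem HasExponentialType.norm_le_mul_exp_abs_im (htype : HasExponentialType f σ)
    (hf : Differentiable ℂ f) (hM : ∀ x : ℝ, ‖f x‖ ≤ M) (z : ℂ) :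
    ‖f z‖ ≤ M * Real.exp (σ * |z.im|) := by
  rcases le_total 0 z.im with hz | hz
  · simpa [abs_of_nonneg hz] using htype.norm_le_mul_exp_im hf hM hz
  · have hM_neg (x : ℝ) : ‖f (-x)‖ ≤ M := by simpa using hM (-x)
    simpa [abs_of_nonpos hz] using
      htype.comp_neg.norm_le_mul_exp_im (by fun_prop) hM_neg (z := -z) (by simpa using hz)

end PhragmenLindelof

/-! ### Bernstein's inequality -/

section Bernstein

variable [CompleteSpace E] {f : ℂ → E} {σ M : ℝ}

theorem norm_deriv_le_of_norm_le_exp_abs_im (hσ : 0 < σ) (hf : Differentiable ℂ f)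
    (hb : ∀ z, ‖f z‖ ≤ M * Real.exp (σ * |z.im|)) (z : ℂ) :
    ‖deriv f z‖ ≤ σ * M * Real.exp (σ * |z.im|) := by
  have hM : 0 ≤ M := by simpa using (norm_nonneg _).trans (hb 0)
  set φ : ℂ → E := fun w ↦ f (z + (σ⁻¹ : ℝ) * w) with hφ
  have hderiv : deriv φ 0 = ((σ⁻¹ : ℝ) : ℂ) • deriv f z := by
    rw [hφ, deriv_comp_mul_left ((σ⁻¹ : ℝ) : ℂ) (fun w ↦ f (z + w)), deriv_comp_const_add, mul_zero,
      add_zero]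
  have hφ_bound (w : ℂ) : ‖φ w‖ ≤ M * Real.exp (σ * |z.im|) * Real.exp |w.im| :=
    calc ‖φ w‖ ≤ M * Real.exp (σ * |(z + (σ⁻¹ : ℝ) * w).im|) := hb _
      _ ≤ M * Real.exp (σ * (|z.im| + σ⁻¹ * |w.im|)) := by
          gcongr
          rw [add_im, im_ofReal_mul]
          refine (abs_add_le _ _).trans_eq ?_
          rw [abs_mul, abs_of_pos (inv_pos.2 hσ)]
      _ = M * Real.exp (σ * |z.im|) * Real.exp |w.im| := by
          rw [mul_add, mul_inv_cancel_left₀ hσ.ne', Real.exp_add, mul_assoc]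
  have hzero := norm_deriv_zero_le_of_norm_le_exp_abs_im (by fun_prop) hφ_bound
  rwa [hderiv, norm_smul, norm_real, Real.norm_of_nonneg (inv_pos.2 hσ).le,
    inv_mul_le_iff₀ hσ, ← mul_assoc] at hzero

theorem norm_iteratedDeriv_le_of_norm_le_exp_abs_im (hσ : 0 < σ) (hf : Differentiable ℂ f)
    (hb : ∀ z, ‖f z‖ ≤ M * Real.exp (σ * |z.im|)) (k : ℕ) (z : ℂ) :
    ‖iteratedDeriv k f z‖ ≤ σ ^ k * M * Real.exp (σ * |z.im|) := by
  induction k generalizing z with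
  | zero => simpa using hb z
  | succ k ih =>
    have hdiff : Differentiable ℂ (iteratedDeriv k f) :=
      hf.contDiff.differentiable_iteratedDeriv k (WithTop.coe_lt_top _)
    rw [iteratedDeriv_succ, pow_succ', mul_assoc σ]
    exact norm_deriv_le_of_norm_le_exp_abs_im hσ hdiff ih z

theorem HasExponentialType.norm_iteratedDeriv_le (htype : HasExponentialType f σ) (hσ : 0 < σ)
    (hf : Differentiable ℂ f) (hM : ∀ x : ℝ, ‖f x‖ ≤ M) (k : ℕ) (x : ℝ) :
    ‖iteratedDeriv k f x‖ ≤ σ ^ k * M := by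
  simpa using norm_iteratedDeriv_le_of_norm_le_exp_abs_im hσ hf
    (htype.norm_le_mul_exp_abs_im hf hM) k x

theorem convex_setOf_im_eq_zero : Convex ℝ {z : ℂ | z.im = 0} :=
  convex_hyperplane imLm.isLinear 0

theorem HasExponentialType.norm_deriv_sub_deriv_le (htype : HasExponentialType f σ) (hσ : 0 < σ)
    (hf : Differentiable ℂ f) (hM : ∀ x : ℝ, ‖f x‖ ≤ M) {z w : ℂ} (hz : z.im = 0)
    (hw : w.im = 0) : ‖deriv f w - deriv f z‖ ≤ σ ^ 2 * M * ‖w - z‖ := by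
  have hderiv : Differentiable ℂ (deriv f) := hf.contDiff.differentiable_deriv_two
  refine convex_setOf_im_eq_zero.norm_image_sub_le_of_norm_deriv_le (fun u _ ↦ hderiv u)
    (fun u hu ↦ ?_) hz hw
  have hu_real : (u.re : ℂ) = u := Complex.ext rfl (Eq.symm hu)
  simpa [iteratedDeriv_succ, hu_real] using htype.norm_iteratedDeriv_le hσ hf hM 2 u.re

end Bernstein

/-! ### The first-order Taylor remainder -/

section Remainder

/-- The error `S_f(x; h)` of the first-order Taylor expansion of `f` at `x` with increment `h`.
The derivative is the complex one, and `x`, `h` are allowed to be complex. -/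
noncomputable def firstOrderRemainder (f : ℂ → E) (x h : ℂ) : E :=
  f (x + h) - f x - h • deriv f x

variable {f : ℂ → E} {K : ℝ} {x h h' : ℂ}

theorem hasDerivAt_firstOrderRemainder (hf : Differentiable ℂ f) (x h : ℂ) :
    HasDerivAt (firstOrderRemainder f x) (deriv f (x + h) - deriv f x) h := by
  have hshift := (hf (x + h)).hasDerivAt.comp_const_add x h
  exact ((hshift.sub_const (f x)).sub ((hasDerivAt_id h).smul_const (deriv f x))).congr_deriv
    (by rw [one_smul])

theorem norm_sub_le_of_norm_deriv_le_affine {F : Type*} [NormedAddCommGroup F] [NormedSpace ℝ F]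
    {u u' : ℝ → F} {A B : ℝ} (hu : ∀ s ∈ Set.Icc 0 1, HasDerivAt u (u' s) s)
    (hu' : ∀ s ∈ Set.Ico 0 1, ‖u' s‖ ≤ A + B * s) : ‖u 1 - u 0‖ ≤ A + B / 2 := by
  have hmajorant (s : ℝ) : HasDerivAt (fun s ↦ A * s + B * s ^ 2 / 2) (A + B * s) s := by
    refine (((hasDerivAt_id s).const_mul A).add
      (((hasDerivAt_pow 2 s).const_mul B).div_const 2)).congr_deriv ?_
    norm_num
    ring
  have hle := image_norm_le_of_norm_deriv_right_le_deriv_boundary (f := fun s ↦ u s - u 0)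
    (fun s hs ↦ (hu s hs).continuousAt.continuousWithinAt.sub continuousWithinAt_const)
    (fun s hs ↦ ((hu s ⟨hs.1, hs.2.le⟩).sub_const _).hasDerivWithinAt) (by simp) hmajorant hu'
    (Set.right_mem_Icc.2 zero_le_one)
  simpa using hle

theorem norm_firstOrderRemainder_sub_le (hf : Differentiable ℂ f) (hK : 0 ≤ K)
    (hlip : ∀ t ∈ segment ℝ h h', ‖deriv f (x + t) - deriv f x‖ ≤ K * ‖t‖) :
    ‖firstOrderRemainder f x h' - firstOrderRemainder f x h‖ ≤
      K * (‖h‖ + ‖h' - h‖ / 2) * ‖h' - h‖ := by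
  let : NormedSpace ℝ E := .restrictScalars ℝ ℂ E
  set γ : ℝ → ℂ := ⇑(AffineMap.lineMap h h' : ℝ →ᵃ[ℝ] ℂ) with hγ
  have hγ_norm : ∀ s ∈ Set.Ico (0 : ℝ) 1, ‖γ s‖ ≤ ‖h‖ + s * ‖h' - h‖ := fun s hs ↦ by
    rw [hγ, AffineMap.lineMap_apply_module', add_comm]
    refine (norm_add_le _ _).trans_eq ?_
    rw [norm_smul, Real.norm_of_nonneg hs.1]
  have hderiv (s : ℝ) : HasDerivAt (firstOrderRemainder f x ∘ γ)
      ((h' - h) • (deriv f (x + γ s) - deriv f x)) s :=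
    (hasDerivAt_firstOrderRemainder hf x (γ s)).scomp s AffineMap.hasDerivAt_lineMap
  have hderiv_le : ∀ s ∈ Set.Ico (0 : ℝ) 1, ‖(h' - h) • (deriv f (x + γ s) - deriv f x)‖ ≤
      ‖h' - h‖ * K * ‖h‖ + ‖h' - h‖ * K * ‖h' - h‖ * s := fun s hs ↦ by
    have hmem : γ s ∈ segment ℝ h h' := by
      rw [segment_eq_image_lineMap]
      exact Set.mem_image_of_mem _ ⟨hs.1, hs.2.le⟩
    calc ‖(h' - h) • (deriv f (x + γ s) - deriv f x)‖
        ≤ ‖h' - h‖ * (K * (‖h‖ + s * ‖h' - h‖)) := by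
          rw [norm_smul]
          gcongr
          exact (hlip _ hmem).trans (by gcongr; exact hγ_norm s hs)
      _ = ‖h' - h‖ * K * ‖h‖ + ‖h' - h‖ * K * ‖h' - h‖ * s := by ring
  have hle := norm_sub_le_of_norm_deriv_le_affine (fun s _ ↦ hderiv s) hderiv_le
  simp only [hγ, Function.comp_apply, AffineMap.lineMap_apply_one,
    AffineMap.lineMap_apply_zero] at hle
  exact hle.trans_eq (by ring)

theorem norm_firstOrderRemainder_sub_le_min (hf : Differentiable ℂ f) (hK : 0 ≤ K)
    (hlip : ∀ t ∈ segment ℝ h h', ‖deriv f (x + t) - deriv f x‖ ≤ K * ‖t‖) :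
    ‖firstOrderRemainder f x h' - firstOrderRemainder f x h‖ ≤
      K * (min ‖h‖ ‖h'‖ + ‖h' - h‖ / 2) * ‖h' - h‖ := by
  rcases min_choice ‖h‖ ‖h'‖ with hmin | hmin
  · rw [hmin]
    exact norm_firstOrderRemainder_sub_le hf hK hlip
  · rw [hmin, norm_sub_rev, norm_sub_rev h' h]
    exact norm_firstOrderRemainder_sub_le hf hK (segment_symm ℝ h h' ▸ hlip)

end Remainder

theorem stmt1_general [CompleteSpace E] {f : ℂ → E} {σ M : ℝ} (hσ : 0 < σ)
    (hf : Differentiable ℂ f) (htype : HasExponentialType f σ) (hM : ∀ x : ℝ, ‖f x‖ ≤ M)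
    (x h h' : ℝ) :
    ‖firstOrderRemainder f x h' - firstOrderRemainder f x h‖ ≤
      σ ^ 2 * M * (min |h| |h'| + |h' - h| / 2) * |h' - h| := by
  have hM_nonneg : 0 ≤ M := (norm_nonneg _).trans (hM 0)
  have hlip : ∀ t ∈ segment ℝ (h : ℂ) h', ‖deriv f (x + t) - deriv f x‖ ≤ σ ^ 2 * M * ‖t‖ :=
    fun t ht ↦ by
      have ht_im : t.im = 0 :=
        convex_setOf_im_eq_zero.segment_subset (ofReal_im h) (ofReal_im h') ht
      simpa using htype.norm_deriv_sub_deriv_le hσ hf hM (ofReal_im x)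
        (by simpa using ht_im : (x + t).im = 0)
  have hle := norm_firstOrderRemainder_sub_le_min hf (by positivity) hlip
  simpa only [← ofReal_sub, norm_real, Real.norm_eq_abs] using hle

/-- Let `f` be an entire function of exponential type `σ` bounded on the
real line by `M`, and let `S_f(x;h) := f(x+h) - f(x) - f'(x)·h`. Then for all real `x, h, h'`:
`|S_f(x;h') - S_f(x;h)| ≤ σ²·M·δ(h,h')·|h'-h|`, where `δ(h,h') = min(|h|,|h'|) + |h'-h|/2`. -/
theorem stmt1 (f : ℂ → ℂ) (σ M : ℝ) (hσ : 0 < σ)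
    (hf : Differentiable ℂ f)
    (htype : ∀ ε > (0 : ℝ), ∃ C > (0 : ℝ), ∀ z : ℂ, ‖f z‖ ≤ C * Real.exp ((σ + ε) * ‖z‖))
    (hM : ∀ x : ℝ, ‖f x‖ ≤ M) :
    ∀ x h h' : ℝ,
      ‖(f ((x : ℂ) + (h' : ℂ)) - f x - deriv f x * h')
          - (f ((x : ℂ) + (h : ℂ)) - f x - deriv f x * h)‖
        ≤ σ ^ 2 * M * (min |h| |h'| + |h' - h| / 2) * |h' - h| := by
  intro x h h'
  simpa only [firstOrderRemainder, smul_eq_mul, mul_comm (deriv f x)] using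
    stmt1_general hσ hf htype hM x h h'
end

section
/- Let f ∈ B^1_{∞,1}(ℝ) with Littlewood–Paley decomposition f = Σ_{n≥0} f_n, where each f_n is a bounded entire function of exponential type 2^{n+1}. Then for all bounded self-adjoint operators A, H on a separable Hilbert space: ‖f(A+H) − f(A)‖ ≤ 2‖f‖_{B^1_{∞,1}}‖H‖ (operator Lipschitz property). -/
/-!
For an entire function `f` of exponential type `σ`, bounded by `M` on `ℝ`, the Taylor series of `f`
extends `x ↦ f(A + xB)` to an entire operator-valued function of type `σ‖B‖`, and the spectral
theorem bounds it by `M` on the real line. Bernstein's inequality therefore makes it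
`σM‖B‖`-Lipschitz there; comparing `x = 0` with `x = 1` and summing over the Littlewood–Paley pieces
gives the operator Lipschitz estimate.

Bernstein's inequality reduces by duality to scalar functions `g`. For `|l| > M` the function
`h(z) = g(z) - l e^{-iσz}` has no zeros in the closed upper half-plane, and the Phragmén–Lindelöf
principle for the quotient of `z ↦ conj (h (conj z))` by `h`, which is unimodular on `ℝ`, yields
`|h (conj z)| ≤ |h z|` for `Im z ≥ 0`. Differentiating this across the real axis, for a suitable
`l`, rules out a derivative of `g` exceeding `σM` at a real point.
-/

open Complex Filter Topology ComplexConjugate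

section HalfPlane

variable {E : Type*} [NormedAddCommGroup E] [NormedSpace ℂ E]

theorem norm_le_of_norm_le_on_real_of_upper_half_plane {g : ℂ → E} {b C K M : ℝ}
    (hd : DiffContOnCl ℂ g {z | 0 < z.im})
    (hgrowth : ∀ z : ℂ, 0 < z.im → ‖g z‖ ≤ C * Real.exp (b * ‖z‖))
    (himag : ∀ y : ℝ, 0 < y → ‖g (y * I)‖ ≤ K) (hreal : ∀ x : ℝ, ‖g x‖ ≤ M)
    {z : ℂ} (hz : 0 ≤ z.im) : ‖g z‖ ≤ M := by
  have hrot : -I * z * I = z := by linear_combination (-z) * I_sq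
  rw [← hrot]
  refine PhragmenLindelof.right_half_plane_of_bounded_on_real (f := fun w => g (w * I))
    ?_ ⟨1, one_lt_two, b, ?_⟩ ⟨K, ?_⟩ (fun x => ?_) (by simpa using hz)
  · have hmul : Differentiable ℂ fun w : ℂ => w * I := by fun_prop
    exact hd.comp hmul.diffContOnCl fun w (hw : 0 < w.re) => by simpa using hw
  · refine .of_bound C ?_
    filter_upwards [mem_inf_of_right (mem_principal_self _)] with w (hw : 0 < w.re)
    simpa using hgrowth (w * I) (by simpa using hw)
  · rw [eventually_map]
    filter_upwards [eventually_gt_atTop 0] with y hy using himag y hy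
  · have hI : (x : ℂ) * I * I = (-x : ℝ) := by
      push_cast
      linear_combination (x : ℂ) * I_sq
    simpa only [hI] using hreal (-x)

theorem norm_apply_conj_le_of_norm_apply_conj_le_mul {h : ℂ → ℂ} {K : ℝ}
    (hd : Differentiable ℂ h) (hne : ∀ z : ℂ, 0 ≤ z.im → h z ≠ 0)
    (hK : ∀ z : ℂ, 0 ≤ z.im → ‖h (conj z)‖ ≤ K * ‖h z‖) {z : ℂ} (hz : 0 ≤ z.im) :
    ‖h (conj z)‖ ≤ ‖h z‖ := by
  let q : ℂ → ℂ := fun w => (conj ∘ h ∘ conj) w / h w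
  have hq (w : ℂ) : ‖q w‖ = ‖h (conj w)‖ / ‖h w‖ := by
    simp only [q, norm_div, Function.comp_apply, RCLike.norm_conj]
  have hqd : DiffContOnCl ℂ q {w | 0 < w.im} := by
    refine DifferentiableOn.diffContOnCl fun w hw => ?_
    rw [closure_setOfPred_lt_im] at hw
    exact ((differentiableAt_conj_conj_iff.2 (hd _)).div (hd w) (hne w hw)).differentiableWithinAt
  have hqK (w : ℂ) (hw : 0 ≤ w.im) : ‖q w‖ ≤ K := by
    rw [hq, div_le_iff₀ (norm_pos_iff.2 (hne w hw))]
    exact hK w hw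
  have hq1 : ‖q z‖ ≤ 1 :=
    norm_le_of_norm_le_on_real_of_upper_half_plane (b := 0) hqd
      (fun w hw => by simpa using hqK w hw.le) (fun y hy => hqK _ (by simpa using hy.le))
      (fun x => by rw [hq, conj_ofReal]; exact div_self_le_one _) hz
  rwa [hq, div_le_one (norm_pos_iff.2 (hne z hz))] at hq1

end HalfPlane

/-- `g` is an entire function of exponential type at most `σ`, with values in a normed space. -/
structure HasExponentialType_s17 {E : Type*} [NormedAddCommGroup E] [NormedSpace ℂ E]
    (g : ℂ → E) (σ : ℝ) : Prop where
  differentiable : Differentiable ℂ g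
  exists_norm_le : ∀ ε > 0, ∃ C, ∀ z, ‖g z‖ ≤ C * Real.exp ((σ + ε) * ‖z‖)

theorem norm_exp_neg_I_mul (τ : ℝ) (z : ℂ) : ‖exp (-I * τ * z)‖ = Real.exp (τ * z.im) := by
  simp [norm_exp]

theorem nonneg_of_hasDerivAt_of_apply_neg_le {φ : ℝ → ℝ} {d : ℝ} (hφ : HasDerivAt φ d 0)
    (hle : ∀ t > 0, φ (-t) ≤ φ t) : 0 ≤ d := by
  have hneg : HasDerivAt (fun t => φ (-t)) (-d) 0 := by
    simpa using (show HasDerivAt φ d (0 - 0) by simpa using hφ).comp_const_sub 0 0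
  have hodd : HasDerivAt (fun t => φ t - φ (-t)) (d - -d) 0 := hφ.sub hneg
  have hslope := hodd.tendsto_slope_zero_right
  have : 0 ≤ d - -d := by
    refine ge_of_tendsto hslope ?_
    filter_upwards [self_mem_nhdsWithin] with t (ht : 0 < t)
    have := sub_nonneg.2 (hle t ht)
    simp only [zero_add, neg_zero, sub_self, sub_zero, smul_eq_mul]
    positivity
  linarith

namespace HasExponentialType_s17

section NormedSpace

variable {E : Type*} [NormedAddCommGroup E] [NormedSpace ℂ E] {g : ℂ → E} {σ M : ℝ}

theorem comp_neg_s17 (hg : HasExponentialType_s17 g σ) : HasExponentialType_s17 (fun z => g (-z)) σ where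
  differentiable := hg.differentiable.comp differentiable_neg
  exists_norm_le ε hε := by
    obtain ⟨C, hC⟩ := hg.exists_norm_le ε hε
    exact ⟨C, fun z => by simpa using hC (-z)⟩

theorem clm_comp {F : Type*} [NormedAddCommGroup F] [NormedSpace ℂ F]
    (hg : HasExponentialType_s17 g σ) (φ : E →L[ℂ] F) : HasExponentialType_s17 (fun z => φ (g z)) σ where
  differentiable := φ.differentiable.comp hg.differentiable
  exists_norm_le ε hε := by
    obtain ⟨C, hC⟩ := hg.exists_norm_le ε hε
    refine ⟨‖φ‖ * C, fun z => ?_⟩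
    rw [mul_assoc]
    exact φ.le_opNorm_of_le (hC z)

theorem norm_le_mul_exp_im_s17 (hg : HasExponentialType_s17 g σ) (hσ : 0 ≤ σ)
    (hM : ∀ x : ℝ, ‖g x‖ ≤ M) {z : ℂ} (hz : 0 ≤ z.im) : ‖g z‖ ≤ M * Real.exp (σ * z.im) := by
  suffices hτ : ∀ ε > 0, ‖g z‖ ≤ M * Real.exp ((σ + ε) * z.im) by
    have hlim : Tendsto (fun ε => M * Real.exp ((σ + ε) * z.im)) (𝓝[>] 0)
        (𝓝 (M * Real.exp (σ * z.im))) :=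
      (Continuous.tendsto' (by fun_prop) _ _ (by simp)).mono_left nhdsWithin_le_nhds
    exact ge_of_tendsto hlim (by filter_upwards [self_mem_nhdsWithin] with ε hε using hτ ε hε)
  intro ε hε
  obtain ⟨C, hC⟩ := hg.exists_norm_le ε hε
  set τ := σ + ε
  have hτ : 0 ≤ τ := by positivity
  let G : ℂ → E := fun w => exp (-I * (-τ : ℝ) * w) • g w
  have hG (w : ℂ) : ‖G w‖ = Real.exp (-(τ * w.im)) * ‖g w‖ := by
    rw [norm_smul, norm_exp_neg_I_mul, neg_mul]
  have hGd : Differentiable ℂ G := by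
    have := hg.differentiable
    fun_prop
  have hGz : ‖G z‖ ≤ M := by
    refine norm_le_of_norm_le_on_real_of_upper_half_plane hGd.diffContOnCl
      (b := τ) (C := C) (K := C) (fun w hw => ?_) (fun y hy => ?_) (fun x => ?_) hz
    · rw [hG]
      refine (mul_le_of_le_one_left (norm_nonneg _) ?_).trans (hC w)
      exact Real.exp_le_one_iff.2 (neg_nonpos.2 (mul_nonneg hτ hw.le))
    · have hCy : ‖g (y * I)‖ ≤ C * Real.exp (τ * y) := by simpa [abs_of_pos hy] using hC (y * I)
      rw [hG, Real.exp_neg, inv_mul_le_iff₀ (Real.exp_pos _), mul_comm _ C]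
      simpa only [mul_I_im, ofReal_re] using hCy
    · simpa [hG] using hM x
  rwa [hG, Real.exp_neg, inv_mul_le_iff₀ (Real.exp_pos _), mul_comm] at hGz

theorem norm_apply_conj_le_mul_exp_im (hg : HasExponentialType_s17 g σ) (hσ : 0 ≤ σ)
    (hM : ∀ x : ℝ, ‖g x‖ ≤ M) {z : ℂ} (hz : 0 ≤ z.im) :
    ‖g (conj z)‖ ≤ M * Real.exp (σ * z.im) := by
  have hneg (x : ℝ) : ‖g (-x)‖ ≤ M := by simpa using hM (-x)
  simpa using hg.comp_neg_s17.norm_le_mul_exp_im_s17 hσ hneg (z := -conj z) (by simpa using hz)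

end NormedSpace

section Scalar

variable {g : ℂ → ℂ} {σ M : ℝ}

theorem norm_sub_mul_exp_conj_le (hg : HasExponentialType_s17 g σ) (hσ : 0 ≤ σ)
    (hM : ∀ x : ℝ, ‖g x‖ ≤ M) {l : ℂ} (hl : M < ‖l‖) {z : ℂ} (hz : 0 ≤ z.im) :
    ‖g (conj z) - l * exp (-I * σ * conj z)‖ ≤ ‖g z - l * exp (-I * σ * z)‖ := by
  have hgap : 0 < ‖l‖ - M := sub_pos.2 hl
  let h : ℂ → ℂ := fun w => g w - l * exp (-I * σ * w)
  have hlower (w : ℂ) (hw : 0 ≤ w.im) : (‖l‖ - M) * Real.exp (σ * w.im) ≤ ‖h w‖ := by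
    have htri := norm_sub_norm_le (l * exp (-I * σ * w)) (g w)
    rw [norm_sub_rev, norm_mul, norm_exp_neg_I_mul] at htri
    linarith [hg.norm_le_mul_exp_im_s17 hσ hM hw]
  have hupper (w : ℂ) (hw : 0 ≤ w.im) :
      ‖h (conj w)‖ ≤ (M + ‖l‖) * Real.exp (σ * w.im) := by
    have hexp : Real.exp (σ * (conj w).im) ≤ Real.exp (σ * w.im) := by
      gcongr
      rw [conj_im]
      linarith
    calc ‖h (conj w)‖ ≤ ‖g (conj w)‖ + ‖l‖ * Real.exp (σ * (conj w).im) := by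
          rw [← norm_exp_neg_I_mul, ← norm_mul]
          exact norm_sub_le _ _
      _ ≤ M * Real.exp (σ * w.im) + ‖l‖ * Real.exp (σ * w.im) := by
          gcongr
          exact hg.norm_apply_conj_le_mul_exp_im hσ hM hw
      _ = (M + ‖l‖) * Real.exp (σ * w.im) := by ring
  have hd : Differentiable ℂ h := by
    have := hg.differentiable
    fun_prop
  have hM0 : 0 ≤ M := (norm_nonneg _).trans (hM 0)
  refine norm_apply_conj_le_of_norm_apply_conj_le_mul (K := (M + ‖l‖) / (‖l‖ - M)) hd
    (fun w hw => ?_) (fun w hw => ?_) hz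
  · exact norm_pos_iff.1 ((mul_pos hgap (Real.exp_pos _)).trans_le (hlower w hw))
  · calc ‖h (conj w)‖ ≤ (M + ‖l‖) * Real.exp (σ * w.im) := hupper w hw
      _ = (M + ‖l‖) / (‖l‖ - M) * ((‖l‖ - M) * Real.exp (σ * w.im)) := by field_simp
      _ ≤ (M + ‖l‖) / (‖l‖ - M) * ‖h w‖ := by
          gcongr
          exact hlower w hw

theorem inner_sub_deriv_add_nonneg (hg : HasExponentialType_s17 g σ) (hσ : 0 ≤ σ)
    (hM : ∀ x : ℝ, ‖g x‖ ≤ M) (x : ℝ) {l : ℂ} (hl : M < ‖l‖) :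
    0 ≤ inner ℝ (g x - l) ((deriv g x + I * σ * l) * I) := by
  let h : ℂ → ℂ := fun z => g z - l * exp (I * σ * x) * exp (-I * σ * z)
  have hexp : exp (I * σ * x) * exp (-I * σ * x) = 1 := by
    rw [← exp_add]
    simp
  have hx : h x = g x - l := by simp only [h, mul_assoc l, hexp, mul_one]
  have hderiv : HasDerivAt h (deriv g x + I * σ * l) x := by
    have hphase : HasDerivAt (fun z : ℂ => exp (-I * σ * z)) (exp (-I * σ * x) * (-I * σ)) x := by
      simpa using ((hasDerivAt_id (x : ℂ)).const_mul (-I * σ)).cexp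
    convert! (hg.differentiable x).hasDerivAt.sub (hphase.const_mul (l * exp (I * σ * x))) using 1
    linear_combination -(I * σ * l) * hexp
  have hvert : HasDerivAt (fun t : ℝ => h (x + t * I)) ((deriv g x + I * σ * l) * I) 0 := by
    have hline : HasDerivAt (fun t : ℂ => x + t * I) I ((0 : ℝ) : ℂ) := by
      simpa using ((hasDerivAt_id ((0 : ℝ) : ℂ)).mul_const I).const_add (x : ℂ)
    exact (HasDerivAt.comp (h₂ := h) _ (by simpa using hderiv) hline).comp_ofReal
  have hnorm : ‖l * exp (I * σ * x)‖ = ‖l‖ := by simp [norm_exp]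
  have hsq : 0 ≤ 2 * inner ℝ (h x) ((deriv g x + I * σ * l) * I) := by
    refine nonneg_of_hasDerivAt_of_apply_neg_le (by simpa using hvert.norm_sq) fun t ht => ?_
    have hrefl := hg.norm_sub_mul_exp_conj_le hσ hM (hnorm.symm ▸ hl)
      (z := x + t * I) (by simpa using ht.le)
    have hconj : conj (x + t * I : ℂ) = x + (-t : ℝ) * I := by simp
    rw [hconj] at hrefl
    exact pow_le_pow_left₀ (norm_nonneg _) hrefl 2
  rw [hx] at hsq
  linarith

theorem norm_deriv_scalar_le (hg : HasExponentialType_s17 g σ) (hσ : 0 ≤ σ)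
    (hM : ∀ x : ℝ, ‖g x‖ ≤ M) (x : ℝ) : ‖deriv g x‖ ≤ σ * M := by
  have hM0 : 0 ≤ M := (norm_nonneg _).trans (hM 0)
  by_contra! hlt
  set d := deriv g x
  have hd : 0 < ‖d‖ := (mul_nonneg hσ hM0).trans_lt hlt
  obtain ⟨c, hc, hσc⟩ : ∃ c : ℝ, M < c * ‖d‖ ∧ σ * c < 1 := by
    obtain ⟨δ, hδ, hσδ⟩ := exists_pos_mul_lt (sub_pos.2 hlt) σ
    refine ⟨(M + δ) / ‖d‖, ?_, ?_⟩
    · rw [div_mul_cancel₀ _ hd.ne']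
      linarith
    · rw [← mul_div_assoc, div_lt_one hd]
      linarith
  -- For `l = i c d` the velocity `d + i σ l` is the positive multiple `(1 - σ c) d` of `d`.
  have hl : M < ‖c • (d * I)‖ := by
    rw [norm_smul, norm_mul, norm_I, mul_one]
    exact hc.trans_le (by gcongr; exact le_abs_self c)
  have hinner := hg.inner_sub_deriv_add_nonneg hσ hM x hl
  have hshift : (d + I * σ * (c • (d * I))) * I = (1 - σ * c) • (d * I) := by
    simp only [real_smul]
    push_cast
    linear_combination σ * c * d * I * I_sq
  have hcauchy : inner ℝ (g x) (d * I) ≤ M * ‖d‖ := by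
    refine (real_inner_le_norm _ _).trans ?_
    rw [norm_mul, norm_I, mul_one]
    gcongr
    exact hM x
  have hself : inner ℝ (d * I) (d * I) = ‖d‖ * ‖d‖ := by
    rw [real_inner_self_eq_norm_mul_norm, norm_mul, norm_I, mul_one]
  have : (1 - σ * c) * (inner ℝ (g x) (d * I) - c * (‖d‖ * ‖d‖)) < 0 :=
    mul_neg_of_pos_of_neg (sub_pos.2 hσc) (by nlinarith)
  rw [hshift, inner_smul_right, inner_sub_left, real_inner_smul_left, hself] at hinner
  linarith

end Scalar

section Bernstein

variable {E : Type*} [NormedAddCommGroup E] [NormedSpace ℂ E] {g : ℂ → E} {σ M : ℝ}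

theorem norm_deriv_le (hg : HasExponentialType_s17 g σ) (hσ : 0 ≤ σ)
    (hM : ∀ x : ℝ, ‖g x‖ ≤ M) (x : ℝ) : ‖deriv g x‖ ≤ σ * M := by
  have hM0 : 0 ≤ M := (norm_nonneg _).trans (hM 0)
  refine NormedSpace.norm_le_dual_bound ℂ _ (by positivity) fun φ => ?_
  have hφ : deriv (fun z => φ (g z)) x = φ (deriv g x) :=
    (φ.hasFDerivAt.comp_hasDerivAt (x : ℂ) (hg.differentiable x).hasDerivAt).deriv
  rw [← hφ, mul_assoc, mul_comm M]
  exact (hg.clm_comp φ).norm_deriv_scalar_le hσ (fun y => φ.le_opNorm_of_le (hM y)) x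

theorem norm_image_sub_le (hg : HasExponentialType_s17 g σ) (hσ : 0 ≤ σ)
    (hM : ∀ x : ℝ, ‖g x‖ ≤ M) (x y : ℝ) : ‖g y - g x‖ ≤ σ * M * ‖y - x‖ :=
  convex_univ.norm_image_sub_le_of_norm_hasDerivWithin_le (f := fun t : ℝ => g t)
    (fun t _ => by
      simpa [Function.comp_def] using
        (hg.differentiable t).hasDerivAt.scomp t ofRealCLM.hasDerivAt)
    (fun t _ => hg.norm_deriv_le hσ hM t) (Set.mem_univ x) (Set.mem_univ y)

end Bernstein

end HasExponentialType_s17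

section EntireCalculus

/-- The `k`-th Taylor coefficient of `f` at the origin. -/
noncomputable def taylorCoeff (f : ℂ → ℂ) (k : ℕ) : ℂ :=
  (k.factorial : ℂ)⁻¹ * iteratedDeriv k f 0

/-- The value of the entire function `f` at an element of a Banach algebra, as the sum of its Taylor
series. Unlike `cfc f T`, this makes sense for non-normal `T`; if the series diverges,
which does not happen for entire `f`, it is the junk value `0`. -/
noncomputable def entireCalculus {𝒜 : Type*} [NormedRing 𝒜] [NormedAlgebra ℂ 𝒜]
    (f : ℂ → ℂ) (T : 𝒜) : 𝒜 :=
  ∑' k, taylorCoeff f k • T ^ k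

variable {f : ℂ → ℂ}

theorem norm_taylorCoeff_le (hf : Differentiable ℂ f) {R K : ℝ} (hR : 0 < R)
    (hK : ∀ z ∈ Metric.sphere 0 R, ‖f z‖ ≤ K) (k : ℕ) : ‖taylorCoeff f k‖ ≤ K / R ^ k := by
  have hcauchy := norm_iteratedDeriv_le_of_forall_mem_sphere_norm_le k hR hf.diffContOnCl hK
  have hk : (0 : ℝ) < k.factorial := by exact_mod_cast k.factorial_pos
  rwa [taylorCoeff, norm_mul, norm_inv, norm_natCast, inv_mul_le_iff₀ hk, ← mul_div_assoc]

theorem entireCalculus_apply_complex (hf : Differentiable ℂ f) (z : ℂ) :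
    entireCalculus f z = f z := by
  rw [← (hasSum_taylorSeries_of_entire hf 0 z).tsum_eq]
  refine tsum_congr fun k => ?_
  simp only [taylorCoeff, sub_zero, smul_eq_mul]
  ring

theorem hasSum_mul_geometric_div_add_one (K : ℝ) {r : ℝ} (hr : 0 ≤ r) :
    HasSum (fun k : ℕ => K * (r / (r + 1)) ^ k) (K * (r + 1)) := by
  have hsum : (1 - r / (r + 1))⁻¹ = r + 1 := by field_simp; ring
  have hlt : r / (r + 1) < 1 := (div_lt_one (by positivity)).2 (lt_add_one r)
  simpa only [hsum] using (hasSum_geometric_of_lt_one (by positivity) hlt).mul_left K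

section BanachAlgebra

variable {𝒜 : Type*} [NormedRing 𝒜] [NormedAlgebra ℂ 𝒜] [NormOneClass 𝒜]

theorem norm_taylorCoeff_smul_pow_le (hf : Differentiable ℂ f) {r K : ℝ}
    (hK : ∀ z ∈ Metric.sphere 0 (r + 1), ‖f z‖ ≤ K) {T : 𝒜} (hT : ‖T‖ ≤ r) (k : ℕ) :
    ‖taylorCoeff f k • T ^ k‖ ≤ K * (r / (r + 1)) ^ k := by
  have hr : 0 < r + 1 := by linarith [norm_nonneg T]
  have hcoeff := norm_taylorCoeff_le hf hr hK k
  calc ‖taylorCoeff f k • T ^ k‖ = ‖taylorCoeff f k‖ * ‖T ^ k‖ := norm_smul _ _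
    _ ≤ K / (r + 1) ^ k * r ^ k := by
        gcongr
        · exact (norm_nonneg _).trans hcoeff
        · exact (norm_pow_le T k).trans (by gcongr)
    _ = K * (r / (r + 1)) ^ k := by rw [div_pow]; ring

theorem norm_entireCalculus_le (hf : Differentiable ℂ f) {r K : ℝ}
    (hK : ∀ z ∈ Metric.sphere 0 (r + 1), ‖f z‖ ≤ K) {T : 𝒜} (hT : ‖T‖ ≤ r) :
    ‖entireCalculus f T‖ ≤ K * (r + 1) :=
  tsum_of_norm_bounded (hasSum_mul_geometric_div_add_one K ((norm_nonneg T).trans hT))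
    (norm_taylorCoeff_smul_pow_le hf hK hT)

variable (𝒜) in
theorem exists_summable_norm_taylorCoeff_smul_pow_le (hf : Differentiable ℂ f) {r : ℝ}
    (hr : 0 ≤ r) :
    ∃ u : ℕ → ℝ, Summable u ∧ ∀ k, ∀ T : 𝒜, ‖T‖ ≤ r → ‖taylorCoeff f k • T ^ k‖ ≤ u k := by
  obtain ⟨K, hK⟩ := (isCompact_sphere (0 : ℂ) (r + 1)).exists_bound_of_continuousOn
    hf.continuous.continuousOn
  exact ⟨_, (hasSum_mul_geometric_div_add_one K hr).summable,
    fun k T hT => norm_taylorCoeff_smul_pow_le hf hK hT k⟩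

theorem differentiable_entireCalculus_comp [CompleteSpace 𝒜] (hf : Differentiable ℂ f)
    {g : ℂ → 𝒜} (hg : Differentiable ℂ g) : Differentiable ℂ fun z => entireCalculus f (g z) := by
  intro z
  obtain ⟨u, hu, hbound⟩ := exists_summable_norm_taylorCoeff_smul_pow_le 𝒜 hf
    (r := ‖g z‖ + 1) (by positivity)
  have hopen : IsOpen {w | ‖g w‖ < ‖g z‖ + 1} :=
    isOpen_lt hg.continuous.norm continuous_const
  have hon := differentiableOn_tsum_of_summable_norm hu
    (F := fun k w => taylorCoeff f k • g w ^ k) (fun k => by fun_prop) hopen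
    (fun k w hw => hbound k (g w) (le_of_lt hw))
  exact hon.differentiableAt (hopen.mem_nhds (lt_add_one ‖g z‖))

theorem HasExponentialType_s17.entireCalculus_add_smul [CompleteSpace 𝒜] {σ : ℝ}
    (hf : HasExponentialType_s17 f σ) (A B : 𝒜) :
    HasExponentialType_s17 (fun z : ℂ => entireCalculus f (A + z • B)) (σ * ‖B‖) where
  differentiable := differentiable_entireCalculus_comp hf.differentiable (by fun_prop)
  exists_norm_le ε hε := by
    obtain ⟨δ, hδ, hδε⟩ := exists_pos_mul_lt hε (2 * ‖B‖)
    obtain ⟨C, hC⟩ := hf.exists_norm_le δ hδ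
    have hC0 : 0 ≤ C := by simpa using (norm_nonneg _).trans (hC 0)
    refine ⟨C * Real.exp ((σ + 2 * δ) * (‖A‖ + 1)) / δ, fun z => ?_⟩
    set r := ‖A‖ + ‖z‖ * ‖B‖
    have hnorm : ‖A + z • B‖ ≤ r := norm_add_le_of_le le_rfl (norm_smul_le z B)
    have hsphere : ∀ w ∈ Metric.sphere 0 (r + 1), ‖f w‖ ≤ C * Real.exp ((σ + δ) * (r + 1)) :=
      fun w hw => mem_sphere_zero_iff_norm.1 hw ▸ hC w
    have hlinear : r + 1 ≤ Real.exp (δ * (r + 1)) / δ := by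
      rw [le_div_iff₀ hδ]
      linarith [Real.add_one_le_exp (δ * (r + 1))]
    calc ‖entireCalculus f (A + z • B)‖
      _ ≤ C * Real.exp ((σ + δ) * (r + 1)) * (r + 1) :=
          norm_entireCalculus_le hf.differentiable hsphere hnorm
      _ ≤ C * Real.exp ((σ + δ) * (r + 1)) * (Real.exp (δ * (r + 1)) / δ) := by gcongr
      _ = C * Real.exp ((σ + 2 * δ) * (‖A‖ + 1)) / δ *
            Real.exp ((σ * ‖B‖ + 2 * ‖B‖ * δ) * ‖z‖) := by
          have hexp : Real.exp ((σ + δ) * (r + 1)) * Real.exp (δ * (r + 1)) =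
              Real.exp ((σ + 2 * δ) * (‖A‖ + 1)) *
                Real.exp ((σ * ‖B‖ + 2 * ‖B‖ * δ) * ‖z‖) := by
            rw [← Real.exp_add, ← Real.exp_add]
            simp only [r]
            ring_nf
          linear_combination C / δ * hexp
      _ ≤ _ := by gcongr

end BanachAlgebra

end EntireCalculus

section FunctionalCalculus

theorem hasSum_cfc {ι 𝕜 𝒜 : Type*} {p : 𝒜 → Prop} [RCLike 𝕜] [TopologicalSpace 𝒜] [Ring 𝒜]
    [StarRing 𝒜] [Algebra 𝕜 𝒜] [ContinuousFunctionalCalculus 𝕜 𝒜 p] {T : 𝒜} {f : ι → 𝕜 → 𝕜}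
    {F : 𝕜 → 𝕜} {u : ι → ℝ} (hf : ∀ i, ContinuousOn (f i) (spectrum 𝕜 T)) (hu : Summable u)
    (hbound : ∀ i, ∀ z ∈ spectrum 𝕜 T, ‖f i z‖ ≤ u i)
    (hF : ∀ z ∈ spectrum 𝕜 T, F z = ∑' i, f i z) :
    HasSum (fun i => cfc (f i) T) (cfc F T) := by
  have hunif : TendstoUniformlyOn (fun s => ∑ i ∈ s, f i) F atTop (spectrum 𝕜 T) := by
    refine ((tendstoUniformlyOn_tsum hu hbound).congr_right fun z hz => (hF z hz).symm).congr ?_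
    exact .of_forall fun s z _ => (Finset.sum_apply z s f).symm
  have hcont (s : Finset ι) : ContinuousOn (∑ i ∈ s, f i) (spectrum 𝕜 T) := by
    rw [Finset.sum_fn]
    exact continuousOn_finsetSum s fun i _ => hf i
  have hlim := tendsto_cfc_fun hunif (.of_forall hcont)
  simpa only [HasSum, SummationFilter.unconditional_filter, cfc_sum f T _ fun i _ => hf i]
    using hlim

variable {𝒜 : Type*} [CStarAlgebra 𝒜] {f : ℂ → ℂ}

theorem cfc_eq_entireCalculus [Nontrivial 𝒜] (hf : Differentiable ℂ f) (T : 𝒜) [IsStarNormal T] :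
    cfc f T = entireCalculus f T := by
  obtain ⟨u, hu, hbound⟩ := exists_summable_norm_taylorCoeff_smul_pow_le ℂ hf (norm_nonneg T)
  have hsum := hasSum_cfc (f := fun k z => taylorCoeff f k • z ^ k) (T := T) (F := f)
    (fun k => by fun_prop) hu (fun k z hz => hbound k z (spectrum.norm_le_norm_of_mem hz))
    (fun z _ => (entireCalculus_apply_complex hf z).symm)
  rw [← hsum.tsum_eq]
  refine tsum_congr fun k => ?_
  rw [cfc_smul _ _ _ (by fun_prop), cfc_pow_id T k]

theorem norm_cfc_le_of_isSelfAdjoint {M : ℝ} (hM : ∀ x : ℝ, ‖f x‖ ≤ M) {T : 𝒜}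
    (hT : IsSelfAdjoint T) : ‖cfc f T‖ ≤ M :=
  norm_cfc_le ((norm_nonneg _).trans (hM 0)) fun _ hz => hT.mem_spectrum_eq_re hz ▸ hM _

theorem HasExponentialType_s17.norm_cfc_add_sub_cfc_le {σ M : ℝ} (hf : HasExponentialType_s17 f σ)
    (hσ : 0 ≤ σ) (hM : ∀ x : ℝ, ‖f x‖ ≤ M) {A B : 𝒜} (hA : IsSelfAdjoint A)
    (hB : IsSelfAdjoint B) : ‖cfc f (A + B) - cfc f A‖ ≤ σ * M * ‖B‖ := by
  rcases subsingleton_or_nontrivial 𝒜 with _ | _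
  · simp [Subsingleton.elim B 0]
  have hline (x : ℝ) : IsSelfAdjoint (A + (x : ℂ) • B) :=
    hA.add (.smul (conj_ofReal x) hB)
  have hcfc (x : ℝ) : entireCalculus f (A + (x : ℂ) • B) = cfc f (A + (x : ℂ) • B) :=
    have := (hline x).isStarNormal
    (cfc_eq_entireCalculus hf.differentiable _).symm
  have hbernstein := (hf.entireCalculus_add_smul A B).norm_image_sub_le (by positivity)
    (fun x => hcfc x ▸ norm_cfc_le_of_isSelfAdjoint hM (hline x)) 0 1
  rw [hcfc, hcfc] at hbernstein
  simpa [mul_right_comm] using hbernstein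

theorem stmt17_general {F : ℂ → ℂ} {f : ℕ → ℂ → ℂ} {σ a : ℕ → ℝ} {L : ℝ}
    (hσ : ∀ n, 0 ≤ σ n) (hf : ∀ n, HasExponentialType_s17 (f n) (σ n))
    (hbound : ∀ n, ∀ x : ℝ, ‖f n x‖ ≤ a n) (hF : ∀ x : ℝ, F x = ∑' n, f n x)
    (ha : Summable a) (hL : HasSum (fun n => σ n * a n) L)
    {A B : 𝒜} (hA : IsSelfAdjoint A) (hB : IsSelfAdjoint B) :
    ‖cfc F (A + B) - cfc F A‖ ≤ L * ‖B‖ := by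
  have hsum {T : 𝒜} (hT : IsSelfAdjoint T) : HasSum (fun n => cfc (f n) T) (cfc F T) :=
    hasSum_cfc (fun n => (hf n).differentiable.continuous.continuousOn) ha
      (fun n _ hz => hT.mem_spectrum_eq_re hz ▸ hbound n _)
      (fun _ hz => hT.mem_spectrum_eq_re hz ▸ hF _)
  exact ((hsum (hA.add hB)).sub (hsum hA)).norm_le_of_bounded (hL.mul_right ‖B‖) fun n =>
    (hf n).norm_cfc_add_sub_cfc_le (hσ n) (hbound n) hA hB

end FunctionalCalculus

theorem summable_of_summable_two_pow_mul {a : ℕ → ℝ} (ha : ∀ n, 0 ≤ a n)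
    (h : Summable fun n => (2 : ℝ) ^ n * a n) : Summable a :=
  h.of_nonneg_of_le ha fun n => le_mul_of_one_le_left (ha n) (one_le_pow₀ one_le_two)

/-- Let `f ∈ B¹_{∞,1}(ℝ)`, given through its Littlewood–Paley
decomposition `f = ∑_{n≥0} f_n` where each `f_n` is a bounded entire function of
exponential type `2^{n+1}` with `‖f_n‖_{L∞(ℝ)} ≤ a n` and `∑ 2^n a n < ∞` (the Besov
norm).  Then for all bounded self-adjoint operators `A, B` on a Hilbert space:
`‖f(A+B) − f(A)‖ ≤ 2·(∑_n 2^n a n)·‖B‖` (operator Lipschitz property). -/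
theorem stmt17 {H : Type*} [NormedAddCommGroup H] [InnerProductSpace ℂ H] [CompleteSpace H]
    (f : ℝ → ℝ) (hf : Continuous f)
    (fn : ℕ → ℂ → ℂ) (a : ℕ → ℝ)
    (hentire : ∀ n, Differentiable ℂ (fn n))
    (htype : ∀ n, ∀ ε > (0 : ℝ), ∃ C > (0 : ℝ), ∀ z : ℂ,
      ‖fn n z‖ ≤ C * Real.exp (((2 : ℝ) ^ (n + 1) + ε) * ‖z‖))
    (hbound : ∀ n, ∀ x : ℝ, ‖fn n x‖ ≤ a n)
    (hdecomp : ∀ x : ℝ, (f x : ℂ) = ∑' n, fn n x)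
    (hbesov : Summable fun n => (2 : ℝ) ^ n * a n)
    (A B : H →L[ℂ] H) (hA : IsSelfAdjoint A) (hB : IsSelfAdjoint B) :
    ‖cfc f (A + B) - cfc f A‖ ≤ 2 * (∑' n, (2 : ℝ) ^ n * a n) * ‖B‖ := by
  rw [cfc_real_eq_complex f (hA.add hB), cfc_real_eq_complex f hA]
  exact stmt17_general (σ := fun n => 2 ^ (n + 1)) (fun n => by positivity)
    (fun n => ⟨hentire n, fun ε hε => (htype n ε hε).imp fun _ hC => hC.2⟩) hbound hdecomp
    (summable_of_summable_two_pow_mul (fun n => (norm_nonneg _).trans (hbound n 0)) hbesov)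
    (by simpa only [pow_succ', mul_assoc] using hbesov.hasSum.mul_left 2) hA hB
end
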